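/- arXiv:math/0305371 — 2 statements merged into one kernel-verified Lean document; each statement's English description precedes it below -/
import Mathlib

section
/- Let (G,P) be a quasi-lattice ordered group, (E,φ) a finitely aligned product system of graphs over P, and {t_λ : λ ∈ E¹} a Toeplitz–Cuntz–Krieger E-family in a C*-algebra B. Let F ⊆ E¹ be finite with s(λ) ∈ F for every λ ∈ F, let λ ∈ F have d(λ) ≠ e, and set G := F ∖ {λ}. Then for every δ ∈ ∨F ∖ ∨G, Q^{∨F}_δ = Q^{∨G}_{μ_δ} t_δ t_δ*, where μ_δ is the unique element of ∨G such that every μ ∈ ∨G with δ(e,d(μ)) = μ has d(μ) ≤ d(μ_δ). -/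
open scoped Classical

noncomputable section

namespace PSG

variable {G : Type*} [Group G] {Λ : Type*}

/-- `g ≤ h` in the left-invariant partial order induced by the submonoid `P`. -/
def qle (P : Submonoid G) (g h : G) : Prop := g⁻¹ * h ∈ P

/-- `r` is a common upper bound of `p` and `q` in `P`. -/
def IsUB (P : Submonoid G) (p q r : G) : Prop := r ∈ P ∧ qle P p r ∧ qle P q r

/-- `r` is the least common upper bound of `p` and `q` in `P`. -/
def IsLUB2 (P : Submonoid G) (p q r : G) : Prop :=
  IsUB P p q r ∧ ∀ r', IsUB P p q r' → qle P r r'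

/-- `r` is the least upper bound in `P` of the set of degrees `D`. -/
def IsLUBFam (P : Submonoid G) (D : Set G) (r : G) : Prop :=
  r ∈ P ∧ (∀ p ∈ D, qle P p r) ∧ ∀ r' ∈ P, (∀ p ∈ D, qle P p r') → qle P r r'

/-- `(G, P)` is quasi-lattice ordered: `P ∩ P⁻¹ = {1}` and every pair of elements of `P`
with a common upper bound in `P` has a least upper bound in `P`. -/
def QuasiLatticeOrdered (P : Submonoid G) : Prop :=
  (∀ g ∈ P, g⁻¹ ∈ P → g = 1) ∧
    ∀ p ∈ P, ∀ q ∈ P, (∃ r, IsUB P p q r) → ∃ r, IsLUB2 P p q r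

/-- A product system of graphs over `P`, encoded on a single edge set `Λ` (which contains the
vertices as the elements of degree `1`), with degree map `d`, source and range maps `src`, `rng`
(valued in vertices), and partial multiplication `mul` (meaningful when `rng a = src b`). -/
structure IsProductSystem (P : Submonoid G) (d : Λ → G) (src rng : Λ → Λ)
    (mul : Λ → Λ → Λ) : Prop where
  countable : Countable Λ
  d_mem : ∀ a, d a ∈ P
  d_src : ∀ a, d (src a) = 1
  d_rng : ∀ a, d (rng a) = 1
  src_vertex : ∀ v, d v = 1 → src v = v
  rng_vertex : ∀ v, d v = 1 → rng v = v
  d_mul : ∀ a b, rng a = src b → d (mul a b) = d a * d b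
  src_mul : ∀ a b, rng a = src b → src (mul a b) = src a
  rng_mul : ∀ a b, rng a = src b → rng (mul a b) = rng b
  mul_assoc' : ∀ a b c, rng a = src b → rng b = src c →
    mul (mul a b) c = mul a (mul b c)
  src_mul_self : ∀ a, mul (src a) a = a
  mul_rng_self : ∀ a, mul a (rng a) = a
  factor : ∀ p q : G, p ∈ P → q ∈ P → ∀ c, d c = p * q →
    ∃! ab : Λ × Λ, d ab.1 = p ∧ d ab.2 = q ∧ rng ab.1 = src ab.2 ∧ mul ab.1 ab.2 = c

/-- `a` is an initial segment of `c`: `c = a • b` for some (necessarily unique) `b`. -/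
def IsInit (src rng : Λ → Λ) (mul : Λ → Λ → Λ) (a c : Λ) : Prop :=
  ∃ b, rng a = src b ∧ mul a b = c

/-- The set of minimal common extensions of `μ` and `ν`. -/
def MCE (P : Submonoid G) (d : Λ → G) (src rng : Λ → Λ) (mul : Λ → Λ → Λ)
    (μ ν : Λ) : Set Λ :=
  {γ | IsInit src rng mul μ γ ∧ IsInit src rng mul ν γ ∧ IsLUB2 P (d μ) (d ν) (d γ)}

/-- The product system is finitely aligned. -/
def FinitelyAligned (P : Submonoid G) (d : Λ → G) (src rng : Λ → Λ)
    (mul : Λ → Λ → Λ) : Prop :=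
  ∀ μ ν : Λ, (MCE P d src rng mul μ ν).Finite

/-- The set of minimal common extensions of a set `S` of edges. -/
def MCEset (P : Submonoid G) (d : Λ → G) (src rng : Λ → Λ) (mul : Λ → Λ → Λ)
    (S : Set Λ) : Set Λ :=
  {γ | (∀ α ∈ S, IsInit src rng mul α γ) ∧ IsLUBFam P (d '' S) (d γ)}

/-- `∨F`: the union of `MCE(S)` over the nonempty subsets `S ⊆ F`. -/
def vee (P : Submonoid G) (d : Λ → G) (src rng : Λ → Λ) (mul : Λ → Λ → Λ)
    (F : Finset Λ) : Set Λ :=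
  {γ | ∃ S : Finset Λ, S.Nonempty ∧ S ⊆ F ∧ γ ∈ MCEset P d src rng mul ↑S}

/-- Given that `a` is an initial segment of `c`, the (unique) complementary segment;
junk value `c` otherwise. -/
def tail (src rng : Λ → Λ) (mul : Λ → Λ → Λ) (a c : Λ) : Λ :=
  if h : IsInit src rng mul a c then h.choose else c

section CstarFamilies

variable (P : Submonoid G) (d : Λ → G) (src rng : Λ → Λ) (mul : Λ → Λ → Λ)
variable {B : Type*} [CStarAlgebra B] [PartialOrder B] [StarOrderedRing B]

/-- A Toeplitz `E`-family in a C*-algebra `B` (conditions (1)–(4)). -/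
structure IsToeplitzFamily (t : Λ → B) : Prop where
  vertex_sa : ∀ v, d v = 1 → IsSelfAdjoint (t v)
  vertex_idem : ∀ v, d v = 1 → t v * t v = t v
  vertex_orth : ∀ v w, d v = 1 → d w = 1 → v ≠ w → t v * t w = 0
  mul_eq : ∀ a b, rng a = src b → t a * t b = t (mul a b)
  star_mul_self : ∀ a, star (t a) * t a = t (rng a)
  dom : ∀ p : G, p ∈ P → p ≠ 1 → ∀ v, d v = 1 → ∀ F : Finset Λ,
    (∀ a ∈ F, d a = p ∧ src a = v) → (∑ a ∈ F, t a * star (t a)) ≤ t v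

/-- The Nica-covariance/Cuntz–Krieger relation (5):
`tμ* tν = ∑_{γ = μα = νβ ∈ MCE(μ,ν)} tα tβ*`. -/
def TCKrel (t : Λ → B) : Prop :=
  ∀ μ ν : Λ, ∀ M : Finset Λ, ↑M = MCE P d src rng mul μ ν →
    star (t μ) * t ν =
      ∑ γ ∈ M, t (tail src rng mul μ γ) * star (t (tail src rng mul ν γ))

/-- A Toeplitz–Cuntz–Krieger `E`-family: conditions (1)–(5). -/
def IsTCKFamily (t : Λ → B) : Prop :=
  IsToeplitzFamily P d src rng mul t ∧ TCKrel P d src rng mul t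

/-- Condition (†): for every finite `R ⊆ P∖{1}`, every vertex `v`, and all finite sets
`F_p ⊆ s_p⁻¹(v)` (`p ∈ R`), the product `∏_{p ∈ R} (t_v − ∑_{a ∈ F_p} t_a t_a*)` is nonzero.
(The factors commute, so the product is stated for an arbitrary enumeration of `R`.) -/
def Dagger (t : Λ → B) : Prop :=
  ∀ R : List G, R.Nodup → (∀ p ∈ R, p ∈ P ∧ p ≠ 1) →
    ∀ v, d v = 1 → ∀ Fp : G → Finset Λ,
      (∀ p ∈ R, ∀ a ∈ Fp p, d a = p ∧ src a = v) →
        (R.map fun p => t v - ∑ a ∈ Fp p, t a * star (t a)).prod ≠ 0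

/-- The projection `Q^{∨F}_l = t_l t_l* ∏_{l α ∈ ∨F, d α ≠ 1} (t_{s(l)} − t_{lα} t_{lα}*)`.
(The factors commute, so the product is computed over an arbitrary enumeration.) -/
def Qproj (t : Λ → B) (F : Finset Λ) (l : Λ) : B :=
  if h : {α : Λ | d α ≠ 1 ∧ rng l = src α ∧ mul l α ∈ vee P d src rng mul F}.Finite then
    t l * star (t l) *
      (h.toFinset.toList.map fun α =>
        t (src l) - t (mul l α) * star (t (mul l α))).prod
  else 0

end CstarFamilies

/-- The positive cone `ℕ^k` inside `ℤ^k` (written multiplicatively). -/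
def posCone (k : ℕ) : Submonoid (Multiplicative (Fin k → ℤ)) where
  carrier := {g | ∀ i, 0 ≤ Multiplicative.toAdd g i}
  mul_mem' := by
    intro a b ha hb i
    simpa using add_nonneg (ha i) (hb i)
  one_mem' := by
    intro i
    simp

/-- The `i`-th standard generator of `ℕ^k ⊆ ℤ^k`. -/
def egen (k : ℕ) (i : Fin k) : Multiplicative (Fin k → ℤ) :=
  Multiplicative.ofAdd (Pi.single i 1)

end PSG
namespace PSG

section Order

variable {G : Type*} [Group G] {P : Submonoid G}

theorem qle_refl (g : G) : qle P g g := by simp [qle, P.one_mem]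

theorem qle.trans {a b c : G} (h : qle P a b) (h' : qle P b c) : qle P a c := by
  have := P.mul_mem h h'
  rwa [mul_assoc, mul_inv_cancel_left] at this

theorem QuasiLatticeOrdered.qle_antisymm (hP : QuasiLatticeOrdered P) {a b : G}
    (h : qle P a b) (h' : qle P b a) : a = b := by
  have := hP.1 (a⁻¹ * b) h (by simpa [qle] using h')
  exact inv_mul_eq_one.mp this

end Order

section Paths

variable {G : Type*} [Group G] {Λ : Type*} {P : Submonoid G} {d : Λ → G} {src rng : Λ → Λ}
  {mul : Λ → Λ → Λ}

theorem isInit_erased_of_mem_vee_diff {F : Finset Λ} {l δ : Λ}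
    (hδ : δ ∈ vee P d src rng mul F \ vee P d src rng mul (F.erase l)) :
    IsInit src rng mul l δ := by
  obtain ⟨⟨S, hS, hSF, hδS⟩, hδ'⟩ := hδ
  by_contra hl
  refine hδ' ⟨S, hS, fun α hα => Finset.mem_erase.mpr ⟨?_, hSF hα⟩, hδS⟩
  rintro rfl
  exact hl (hδS.1 α hα)

namespace IsProductSystem

theorem isInit_refl (hPS : IsProductSystem P d src rng mul)
    (a : Λ) : IsInit src rng mul a a :=
  ⟨rng a, (hPS.src_vertex _ (hPS.d_rng a)).symm, hPS.mul_rng_self a⟩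

theorem isInit_trans (hPS : IsProductSystem P d src rng mul)
    {a b c : Λ} (h : IsInit src rng mul a b) (h' : IsInit src rng mul b c) :
    IsInit src rng mul a c := by
  obtain ⟨x, hx, rfl⟩ := h
  obtain ⟨y, hy, rfl⟩ := h'
  rw [hPS.rng_mul a x hx] at hy
  exact ⟨mul x y, by rw [hPS.src_mul x y hy, hx], (hPS.mul_assoc' a x y hx hy).symm⟩

theorem qle_of_isInit (hPS : IsProductSystem P d src rng mul)
    {a c : Λ} (h : IsInit src rng mul a c) : qle P (d a) (d c) := by
  obtain ⟨x, hx, rfl⟩ := h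
  rw [qle, hPS.d_mul a x hx, inv_mul_cancel_left]
  exact hPS.d_mem x

theorem isInit_unique (hPS : IsProductSystem P d src rng mul)
    {a b c : Λ} (ha : IsInit src rng mul a c) (hb : IsInit src rng mul b c)
    (hd : d a = d b) : a = b := by
  obtain ⟨x, hx, hxc⟩ := ha
  obtain ⟨y, hy, hyc⟩ := hb
  have hdx : d c = d a * d x := by rw [← hxc, hPS.d_mul a x hx]
  have hdy : d c = d b * d y := by rw [← hyc, hPS.d_mul b y hy]
  have hxy : d y = d x := by rw [hdx, hd] at hdy; exact (mul_left_cancel hdy).symm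
  have h := (hPS.factor (d a) (d x) (hPS.d_mem a) (hPS.d_mem x) c hdx).unique
    (y₁ := (a, x)) (y₂ := (b, y)) ⟨rfl, rfl, hx, hxc⟩ ⟨hd.symm, hxy, hy, hyc⟩
  exact congrArg Prod.fst h

theorem exists_isInit (hPS : IsProductSystem P d src rng mul)
    {p : G} {c : Λ} (hp : p ∈ P) (h : qle P p (d c)) :
    ∃ a, d a = p ∧ IsInit src rng mul a c := by
  obtain ⟨⟨a, b⟩, ⟨ha, -, hab, hc⟩, -⟩ :=
    hPS.factor p (p⁻¹ * d c) hp h c (mul_inv_cancel_left p (d c)).symm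
  exact ⟨a, ha, b, hab, hc⟩

theorem isInit_of_qle (hPS : IsProductSystem P d src rng mul)
    {a b c : Λ} (ha : IsInit src rng mul a c) (hb : IsInit src rng mul b c)
    (h : qle P (d a) (d b)) : IsInit src rng mul a b := by
  obtain ⟨a', hd, ha'⟩ := hPS.exists_isInit (hPS.d_mem a) h
  rwa [hPS.isInit_unique ha (hPS.isInit_trans ha' hb) hd.symm]

theorem exists_mem_MCE (hPS : IsProductSystem P d src rng mul)
    (hP : QuasiLatticeOrdered P) {a b c : Λ} (ha : IsInit src rng mul a c)
    (hb : IsInit src rng mul b c) :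
    ∃ γ ∈ MCE P d src rng mul a b, IsInit src rng mul γ c := by
  obtain ⟨r, hr⟩ := hP.2 (d a) (hPS.d_mem a) (d b) (hPS.d_mem b)
    ⟨d c, hPS.d_mem c, hPS.qle_of_isInit ha, hPS.qle_of_isInit hb⟩
  obtain ⟨γ, rfl, hγ⟩ := hPS.exists_isInit hr.1.1
    (hr.2 _ ⟨hPS.d_mem c, hPS.qle_of_isInit ha, hPS.qle_of_isInit hb⟩)
  exact ⟨γ, ⟨hPS.isInit_of_qle ha hγ hr.1.2.1, hPS.isInit_of_qle hb hγ hr.1.2.2, hr⟩, hγ⟩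

theorem mem_MCEset_singleton (hPS : IsProductSystem P d src rng mul)
    (a : Λ) : a ∈ MCEset P d src rng mul {a} := by
  refine ⟨?_, hPS.d_mem a, ?_, ?_⟩
  · rintro _ rfl
    exact hPS.isInit_refl _
  · rintro _ ⟨_, rfl, rfl⟩
    exact qle_refl _
  · intro r _ hr
    exact hr _ ⟨a, rfl, rfl⟩

theorem eq_of_mem_MCEset_singleton (hPS : IsProductSystem P d src rng mul)
    (hP : QuasiLatticeOrdered P) {a γ : Λ}
    (h : γ ∈ MCEset P d src rng mul {a}) : γ = a := by
  have ha := h.1 a rfl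
  refine hPS.isInit_unique (hPS.isInit_refl γ) ha (hP.qle_antisymm ?_ (hPS.qle_of_isInit ha))
  refine h.2.2.2 _ (hPS.d_mem a) ?_
  rintro _ ⟨_, rfl, rfl⟩
  exact qle_refl _

theorem mem_MCEset_union (hPS : IsProductSystem P d src rng mul)
    {S T : Set Λ} {μ ν γ : Λ} (hμ : μ ∈ MCEset P d src rng mul S)
    (hν : ν ∈ MCEset P d src rng mul T) (hγ : γ ∈ MCE P d src rng mul μ ν) :
    γ ∈ MCEset P d src rng mul (S ∪ T) := by
  have hinit : ∀ α ∈ S ∪ T, IsInit src rng mul α γ := by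
    rintro α (h | h)
    · exact hPS.isInit_trans (hμ.1 α h) hγ.1
    · exact hPS.isInit_trans (hν.1 α h) hγ.2.1
  refine ⟨hinit, hPS.d_mem γ, ?_, ?_⟩
  · rintro _ ⟨α, h, rfl⟩
    exact hPS.qle_of_isInit (hinit α h)
  · intro r hr h
    refine hγ.2.2.2 r ⟨hr, hμ.2.2.2 r hr ?_, hν.2.2.2 r hr ?_⟩ <;>
      rintro _ ⟨α, hα, rfl⟩
    · exact h _ ⟨α, Or.inl hα, rfl⟩
    · exact h _ ⟨α, Or.inr hα, rfl⟩

theorem mem_vee_of_mem_MCE (hPS : IsProductSystem P d src rng mul)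
    {F : Finset Λ} {μ ν γ : Λ} (hμ : μ ∈ vee P d src rng mul F)
    (hν : ν ∈ vee P d src rng mul F) (hγ : γ ∈ MCE P d src rng mul μ ν) :
    γ ∈ vee P d src rng mul F := by
  obtain ⟨S, hS, hSF, hμ⟩ := hμ
  obtain ⟨T, -, hTF, hν⟩ := hν
  refine ⟨S ∪ T, hS.mono Finset.subset_union_left, Finset.union_subset hSF hTF, ?_⟩
  rw [Finset.coe_union]
  exact hPS.mem_MCEset_union hμ hν hγ

theorem exists_mem_MCEset (hPS : IsProductSystem P d src rng mul)
    (hP : QuasiLatticeOrdered P) {c : Λ} {S : Finset Λ} (hS : S.Nonempty)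
    (h : ∀ α ∈ S, IsInit src rng mul α c) :
    ∃ η ∈ MCEset P d src rng mul (S : Set Λ), IsInit src rng mul η c := by
  induction hS using Finset.Nonempty.cons_induction with
  | singleton a =>
    exact ⟨a, by simpa using hPS.mem_MCEset_singleton a, h a (by simp)⟩
  | cons a S ha hS ih =>
    obtain ⟨η, hη, hηc⟩ := ih fun α hα => h α (Finset.mem_cons_of_mem hα)
    obtain ⟨γ, hγ, hγc⟩ := hPS.exists_mem_MCE hP (h a (Finset.mem_cons_self a S)) hηc
    refine ⟨γ, ?_, hγc⟩
    rw [Finset.coe_cons, Set.insert_eq]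
    exact hPS.mem_MCEset_union (hPS.mem_MCEset_singleton a) hη hγ

/-- An upper bound of an erased set that also dominates the erased element dominates the least
upper bound of the whole set. -/
theorem qle_of_mem_MCEset_erase (hPS : IsProductSystem P d src rng mul)
    {S : Finset Λ} {l γ η : Λ} {r : G} (hr : r ∈ P)
    (hγ : γ ∈ MCEset P d src rng mul (S : Set Λ))
    (hη : η ∈ MCEset P d src rng mul (S.erase l : Set Λ))
    (hηr : qle P (d η) r) (hlr : qle P (d l) r) : qle P (d γ) r := by
  refine hγ.2.2.2 r hr ?_
  rintro _ ⟨α, hα, rfl⟩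
  by_cases hαl : α = l
  · rwa [hαl]
  · exact (hPS.qle_of_isInit (hη.1 α (by simpa [hαl] using hα))).trans hηr

theorem vee_finite (hPS : IsProductSystem P d src rng mul)
    (hP : QuasiLatticeOrdered P) (hFA : FinitelyAligned P d src rng mul)
    (F : Finset Λ) : (vee P d src rng mul F).Finite := by
  induction F using Finset.induction_on with
  | empty =>
    refine Set.Finite.subset Set.finite_empty ?_
    rintro γ ⟨S, hS, hSF, -⟩
    exact absurd hS (by simp [Finset.subset_empty.mp hSF])
  | insert a F ha ih =>
    refine ((ih.biUnion fun γ _ => hFA a γ).union (ih.union (Set.finite_singleton a))).subset ?_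
    rintro γ ⟨S, hS, hSF, hγ⟩
    have hSF' : S.erase a ⊆ F := by
      rw [← Finset.subset_insert_iff]
      exact hSF
    by_cases haS : a ∈ S
    · rcases (S.erase a).eq_empty_or_nonempty with he | hne
      · have : S = {a} := by rw [← Finset.insert_erase haS, he]; rfl
        subst this
        exact Or.inr (Or.inr (hPS.eq_of_mem_MCEset_singleton hP (by simpa using hγ)))
      · obtain ⟨η, hη, hηγ⟩ := hPS.exists_mem_MCEset hP hne
          fun α hα => hγ.1 α (Finset.mem_of_mem_erase hα)
        refine Or.inl (Set.mem_biUnion (x := η) ⟨_, hne, hSF', hη⟩ ⟨hγ.1 a haS, hηγ,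
          ⟨hPS.d_mem γ, hPS.qle_of_isInit (hγ.1 a haS), hPS.qle_of_isInit hηγ⟩, ?_⟩)
        rintro r ⟨hr, har, hηr⟩
        exact hPS.qle_of_mem_MCEset_erase hr hγ hη hηr har
    · exact Or.inr (Or.inl ⟨S, hS, by rwa [Finset.erase_eq_of_notMem haS] at hSF', hγ⟩)

theorem Qproj_index_finite (hPS : IsProductSystem P d src rng mul)
    (hP : QuasiLatticeOrdered P) (hFA : FinitelyAligned P d src rng mul)
    (F : Finset Λ) (l : Λ) :
    {α : Λ | d α ≠ 1 ∧ rng l = src α ∧ mul l α ∈ vee P d src rng mul F}.Finite := by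
  refine Set.Finite.of_finite_image (f := mul l)
    ((hPS.vee_finite hP hFA F).subset ?_) ?_
  · rintro _ ⟨α, h, rfl⟩
    exact h.2.2
  · rintro α ⟨-, hα, -⟩ β ⟨-, hβ, -⟩ h
    have hd : d α = d β := by
      have := congrArg d h
      rw [hPS.d_mul l α hα, hPS.d_mul l β hβ] at this
      exact mul_left_cancel this
    have := (hPS.factor (d l) (d α) (hPS.d_mem l) (hPS.d_mem α) _ (hPS.d_mul l α hα)).unique
      (y₁ := (l, α)) (y₂ := (l, β)) ⟨rfl, rfl, hα, rfl⟩ ⟨rfl, hd.symm, hβ, h.symm⟩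
    exact congrArg Prod.snd this

/-- A proper extension in `∨F` of an element of `∨F ∖ ∨(F ∖ {l})` extends an element of
`∨(F ∖ {l})` that properly extends `m`. -/
theorem exists_mem_vee_erase (hPS : IsProductSystem P d src rng mul)
    (hP : QuasiLatticeOrdered P) {F : Finset Λ} {l δ m α : Λ}
    (hδ : δ ∈ vee P d src rng mul F \ vee P d src rng mul (F.erase l))
    (hm : m ∈ vee P d src rng mul (F.erase l)) (hmδ : IsInit src rng mul m δ)
    (hα : d α ≠ 1) (hδα : rng δ = src α) (hα' : mul δ α ∈ vee P d src rng mul F) :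
    ∃ β, d β ≠ 1 ∧ rng m = src β ∧ mul m β ∈ vee P d src rng mul (F.erase l) ∧
      IsInit src rng mul (mul m β) (mul δ α) := by
  have hlδ := isInit_erased_of_mem_vee_diff hδ
  have hδγ : IsInit src rng mul δ (mul δ α) := ⟨α, hδα, rfl⟩
  have hnot : ¬ qle P (d (mul δ α)) (d δ) := by
    intro h
    have h' := hP.qle_antisymm (hPS.qle_of_isInit hδγ) h
    rw [hPS.d_mul δ α hδα] at h'
    exact hα (by simpa using h')
  obtain ⟨S, hS, hSF, hγS⟩ := hα'
  have hne : (S.erase l).Nonempty := by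
    by_contra he
    refine hnot (hγS.2.2.2 _ (hPS.d_mem δ) ?_)
    rintro _ ⟨x, hx, rfl⟩
    have : x = l := by
      by_contra hxl
      exact he ⟨x, Finset.mem_erase.mpr ⟨hxl, hx⟩⟩
    rw [this]
    exact hPS.qle_of_isInit hlδ
  obtain ⟨η, hη, hηγ⟩ := hPS.exists_mem_MCEset hP hne
    fun x hx => hγS.1 x (Finset.mem_of_mem_erase hx)
  have hηvee : η ∈ vee P d src rng mul (F.erase l) :=
    ⟨_, hne, Finset.erase_subset_erase l hSF, hη⟩
  obtain ⟨ζ, hζ, hζγ⟩ := hPS.exists_mem_MCE hP (hPS.isInit_trans hmδ hδγ) hηγ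
  have hζvee := hPS.mem_vee_of_mem_MCE hm hηvee hζ
  obtain ⟨β, hβ, rfl⟩ := hζ.1
  refine ⟨β, fun hβ1 => hnot ?_, hβ, hζvee, hζγ⟩
  refine hPS.qle_of_mem_MCEset_erase (hPS.d_mem δ) hγS hη ?_ (hPS.qle_of_isInit hlδ)
  have hηm := hPS.qle_of_isInit hζ.2.1
  rw [hPS.d_mul m β hβ, hβ1, mul_one] at hηm
  exact hηm.trans (hPS.qle_of_isInit hmδ)

/-- A minimal common extension of `δ` and a proper extension `m β` in `∨(F ∖ {l})` is a proper
extension of `δ` in `∨F`, when `m` is the maximal initial segment of `δ` in `∨(F ∖ {l})`. -/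
theorem exists_mem_vee_of_mem_MCE (hPS : IsProductSystem P d src rng mul)
    (hP : QuasiLatticeOrdered P) {F : Finset Λ} {l δ m β γ : Λ}
    (hδ : δ ∈ vee P d src rng mul F)
    (hmax : ∀ μ ∈ vee P d src rng mul (F.erase l), IsInit src rng mul μ δ → qle P (d μ) (d m))
    (hβ : d β ≠ 1) (hmβ : rng m = src β) (hβ' : mul m β ∈ vee P d src rng mul (F.erase l))
    (hγ : γ ∈ MCE P d src rng mul δ (mul m β)) :
    ∃ α, d α ≠ 1 ∧ rng δ = src α ∧ mul δ α ∈ vee P d src rng mul F ∧ mul δ α = γ := by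
  have hβF : mul m β ∈ vee P d src rng mul F := by
    obtain ⟨S, hS, hSF, h⟩ := hβ'
    exact ⟨S, hS, hSF.trans (Finset.erase_subset l F), h⟩
  have hγF := hPS.mem_vee_of_mem_MCE hδ hβF hγ
  obtain ⟨α, hα, rfl⟩ := hγ.1
  refine ⟨α, fun hα1 => hβ ?_, hα, hγF, rfl⟩
  have hqle : qle P (d (mul δ α)) (d δ) := by
    rw [hPS.d_mul δ α hα, hα1, mul_one]
    exact qle_refl _
  have hinit : IsInit src rng mul (mul m β) δ :=
    hPS.isInit_of_qle hγ.2.1 ⟨α, hα, rfl⟩ ((hPS.qle_of_isInit hγ.2.1).trans hqle)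
  have h := hP.qle_antisymm (hPS.qle_of_isInit ⟨β, hmβ, rfl⟩) (hmax _ hβ' hinit)
  rw [hPS.d_mul m β hmβ] at h
  simpa using h

end IsProductSystem

end Paths

section ListProd

variable {R : Type*}

theorem mul_list_prod_eq_self [Monoid R] {x : R} {L : List R} (h : ∀ a ∈ L, x * a = x) :
    x * L.prod = x := by
  induction L with
  | nil => simp
  | cons a L ih =>
    rw [List.prod_cons, ← mul_assoc, h a (by simp), ih fun b hb => h b (by simp [hb])]

theorem list_prod_mul_eq_zero [MonoidWithZero R] {c a : R} {L : List R}
    (hc : ∀ b ∈ L, Commute b c) (ha : a ∈ L) (hac : a * c = 0) : L.prod * c = 0 := by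
  induction L with
  | nil => simp at ha
  | cons b L ih =>
    have hL : Commute L.prod c :=
      Commute.list_prod_left L c fun x hx => hc x (by simp [hx])
    rw [List.prod_cons, mul_assoc]
    rcases List.mem_cons.mp ha with rfl | ha
    · rw [hL.eq, ← mul_assoc, hac, zero_mul]
    · rw [ih (fun x hx => hc x (by simp [hx])) ha, mul_zero]

end ListProd

section RangeProjections

variable {G : Type*} [Group G] {Λ : Type*} {P : Submonoid G} {d : Λ → G} {src rng : Λ → Λ}
  {mul : Λ → Λ → Λ} {B : Type*} [CStarAlgebra B] {t : Λ → B}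

theorem Qproj_commute_of_commute (hP : QuasiLatticeOrdered P)
    (hPS : IsProductSystem P d src rng mul) (hFA : FinitelyAligned P d src rng mul)
    {F : Finset Λ} {a : Λ} {x : B} (hx : Commute (t a * star (t a)) x)
    (hx' : ∀ c, Commute (t (src a) - t c * star (t c)) x) :
    Commute (Qproj P d src rng mul t F a) x := by
  rw [Qproj, dif_pos (hPS.Qproj_index_finite hP hFA F a)]
  refine hx.mul_left (Commute.list_prod_left _ _ fun b hb => ?_)
  obtain ⟨β, -, rfl⟩ := List.mem_map.mp hb
  exact hx' _

variable [PartialOrder B]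

namespace IsTCKFamily

theorem vertex_mul_range (hPS : IsProductSystem P d src rng mul)
    (ht : IsTCKFamily P d src rng mul t) (a : Λ) :
    t (src a) * (t a * star (t a)) = t a * star (t a) := by
  rw [← mul_assoc, ht.1.mul_eq (src a) a (hPS.rng_vertex _ (hPS.d_src a)), hPS.src_mul_self]

theorem range_mul_range_of_isInit (hPS : IsProductSystem P d src rng mul)
    (ht : IsTCKFamily P d src rng mul t) {a c : Λ} (h : IsInit src rng mul a c) :
    (t a * star (t a)) * (t c * star (t c)) = t c * star (t c) := by
  obtain ⟨b, hb, rfl⟩ := h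
  have ha : t a * t (rng a) = t a := by
    rw [ht.1.mul_eq _ _ (hPS.src_vertex _ (hPS.d_rng a)).symm, hPS.mul_rng_self]
  have : t a * star (t a) * t (mul a b) = t (mul a b) := by
    rw [← ht.1.mul_eq a b hb, mul_assoc, ← mul_assoc (star (t a)), ht.1.star_mul_self,
      ← mul_assoc, ha]
  rw [← mul_assoc, this]

theorem range_mul_range (hFA : FinitelyAligned P d src rng mul)
    (ht : IsTCKFamily P d src rng mul t) (μ ν : Λ) :
    (t μ * star (t μ)) * (t ν * star (t ν)) =
      ∑ γ ∈ (hFA μ ν).toFinset, t γ * star (t γ) := by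
  have h := ht.2 μ ν (hFA μ ν).toFinset (by simp)
  rw [mul_assoc, ← mul_assoc (star (t μ)), h, Finset.sum_mul, Finset.mul_sum]
  refine Finset.sum_congr rfl fun γ hγ => ?_
  have hmul : ∀ a, IsInit src rng mul a γ → t a * t (tail src rng mul a γ) = t γ := by
    intro a ha
    rw [tail, dif_pos ha, ht.1.mul_eq _ _ ha.choose_spec.1, ha.choose_spec.2]
  rw [Set.Finite.mem_toFinset] at hγ
  rw [mul_assoc, ← star_mul, ← mul_assoc, hmul μ hγ.1, hmul ν hγ.2.1]

theorem range_commute (hFA : FinitelyAligned P d src rng mul)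
    (ht : IsTCKFamily P d src rng mul t) (μ ν : Λ) :
    Commute (t μ * star (t μ)) (t ν * star (t ν)) := by
  have h := congrArg star (ht.range_mul_range hFA μ ν)
  have hs : star (∑ γ ∈ (hFA μ ν).toFinset, t γ * star (t γ)) =
      ∑ γ ∈ (hFA μ ν).toFinset, t γ * star (t γ) := by simp
  rw [hs, ← ht.range_mul_range hFA μ ν] at h
  simpa [Commute, SemiconjBy, mul_assoc] using h.symm

theorem vertex_eq_range (hPS : IsProductSystem P d src rng mul)
    (ht : IsTCKFamily P d src rng mul t) (a : Λ) :
    t (src a) = t (src a) * star (t (src a)) := by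
  rw [(ht.1.vertex_sa _ (hPS.d_src a)).star_eq, ht.1.vertex_idem _ (hPS.d_src a)]

theorem range_commute_factor (hPS : IsProductSystem P d src rng mul)
    (hFA : FinitelyAligned P d src rng mul) (ht : IsTCKFamily P d src rng mul t) (a b c : Λ) :
    Commute (t a * star (t a)) (t (src b) - t c * star (t c)) := by
  refine Commute.sub_right ?_ (ht.range_commute hFA a c)
  rw [ht.vertex_eq_range hPS b]
  exact ht.range_commute hFA a _

theorem factor_commute_factor (hPS : IsProductSystem P d src rng mul)
    (hFA : FinitelyAligned P d src rng mul) (ht : IsTCKFamily P d src rng mul t) (a b c e : Λ) :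
    Commute (t (src a) - t c * star (t c)) (t (src b) - t e * star (t e)) := by
  refine Commute.sub_left ?_ (ht.range_commute_factor hPS hFA c b e)
  rw [ht.vertex_eq_range hPS a]
  exact ht.range_commute_factor hPS hFA _ b e

theorem Qproj_mul_range_eq_zero (hP : QuasiLatticeOrdered P)
    (hPS : IsProductSystem P d src rng mul) (hFA : FinitelyAligned P d src rng mul)
    (ht : IsTCKFamily P d src rng mul t) {F : Finset Λ} {a α : Λ} (hα : d α ≠ 1)
    (haα : rng a = src α) (hmem : mul a α ∈ vee P d src rng mul F) :
    Qproj P d src rng mul t F a * (t (mul a α) * star (t (mul a α))) = 0 := by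
  rw [Qproj, dif_pos (hPS.Qproj_index_finite hP hFA F a), mul_assoc]
  rw [list_prod_mul_eq_zero (a := t (src a) - t (mul a α) * star (t (mul a α))), mul_zero]
  · intro b hb
    obtain ⟨β, -, rfl⟩ := List.mem_map.mp hb
    exact (ht.range_commute_factor hPS hFA _ a _).symm
  · exact List.mem_map.mpr ⟨α, by simp [hα, haα, hmem], rfl⟩
  · have h := ht.vertex_mul_range hPS (mul a α)
    rw [hPS.src_mul a α haα] at h
    rw [sub_mul, h, ht.range_mul_range_of_isInit hPS (hPS.isInit_refl _), sub_self]

theorem Qproj_commute_range (hP : QuasiLatticeOrdered P)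
    (hPS : IsProductSystem P d src rng mul) (hFA : FinitelyAligned P d src rng mul)
    (ht : IsTCKFamily P d src rng mul t) (F : Finset Λ) (a c : Λ) :
    Commute (Qproj P d src rng mul t F a) (t c * star (t c)) :=
  Qproj_commute_of_commute hP hPS hFA (ht.range_commute hFA a c)
    fun _ => (ht.range_commute_factor hPS hFA c a _).symm

theorem Qproj_commute (hP : QuasiLatticeOrdered P)
    (hPS : IsProductSystem P d src rng mul) (hFA : FinitelyAligned P d src rng mul)
    (ht : IsTCKFamily P d src rng mul t) (F F' : Finset Λ) (a b : Λ) :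
    Commute (Qproj P d src rng mul t F a) (Qproj P d src rng mul t F' b) :=
  Qproj_commute_of_commute hP hPS hFA (ht.Qproj_commute_range hP hPS hFA F' b a).symm
    fun _ => (Qproj_commute_of_commute hP hPS hFA (ht.range_commute_factor hPS hFA b a _)
      fun _ => ht.factor_commute_factor hPS hFA b a _ _).symm

theorem Qproj_mul_range_self (hP : QuasiLatticeOrdered P)
    (hPS : IsProductSystem P d src rng mul) (hFA : FinitelyAligned P d src rng mul)
    (ht : IsTCKFamily P d src rng mul t) (F : Finset Λ) (a : Λ) :
    Qproj P d src rng mul t F a * (t a * star (t a)) = Qproj P d src rng mul t F a := by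
  rw [(ht.Qproj_commute_range hP hPS hFA F a a).eq, Qproj,
    dif_pos (hPS.Qproj_index_finite hP hFA F a), ← mul_assoc,
    ht.range_mul_range_of_isInit hPS (hPS.isInit_refl a)]

/-- An element under the range projection of `b` that annihilates the range projections of the
proper extensions of `b` in `∨F` is fixed by multiplication with `Q^{∨F}_b`. -/
theorem mul_Qproj_eq_self (hP : QuasiLatticeOrdered P)
    (hPS : IsProductSystem P d src rng mul) (hFA : FinitelyAligned P d src rng mul)
    (ht : IsTCKFamily P d src rng mul t) {F : Finset Λ} {b : Λ} {x : B}
    (hx : x * (t b * star (t b)) = x)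
    (hz : ∀ β, d β ≠ 1 → rng b = src β → mul b β ∈ vee P d src rng mul F →
      x * (t (mul b β) * star (t (mul b β))) = 0) :
    x * Qproj P d src rng mul t F b = x := by
  have hv : x * t (src b) = x := by
    have hcomm : Commute (t b * star (t b)) (t (src b)) := by
      rw [ht.vertex_eq_range hPS b]
      exact ht.range_commute hFA b _
    rw [← hx, mul_assoc, hcomm.eq, ht.vertex_mul_range hPS b]
  rw [Qproj, dif_pos (hPS.Qproj_index_finite hP hFA F b), ← mul_assoc, hx]
  refine mul_list_prod_eq_self fun a ha => ?_
  obtain ⟨β, hβ, rfl⟩ := List.mem_map.mp ha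
  simp only [Finset.mem_toList, Set.Finite.mem_toFinset, Set.mem_ofPred_eq] at hβ
  rw [mul_sub, hv, hz β hβ.1 hβ.2.1 hβ.2.2, sub_zero]

end IsTCKFamily

end RangeProjections

/-- Lemma 7.6: `Q^{∨F}_δ = Q^{∨G}_{μ_δ} t_δ t_δ*` for `δ ∈ ∨F ∖ ∨G`, `G = F ∖ {λ}`. -/
theorem stmt3 {G : Type*} [Group G] {Λ : Type*} (P : Submonoid G)
    (hQLO : QuasiLatticeOrdered P)
    (d : Λ → G) (src rng : Λ → Λ) (mul : Λ → Λ → Λ)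
    (hPS : IsProductSystem P d src rng mul)
    (hFA : FinitelyAligned P d src rng mul)
    {B : Type*} [CStarAlgebra B] [PartialOrder B] [StarOrderedRing B]
    (t : Λ → B) (ht : IsTCKFamily P d src rng mul t)
    (F : Finset Λ) (hsrc : ∀ a ∈ F, src a ∈ F)
    (l : Λ) (hl : l ∈ F) (hdl : d l ≠ 1) :
    ∀ δ ∈ vee P d src rng mul F \ vee P d src rng mul (F.erase l),
      ∀ m : Λ,
        (m ∈ vee P d src rng mul (F.erase l) ∧ IsInit src rng mul m δ ∧
          ∀ μ ∈ vee P d src rng mul (F.erase l), IsInit src rng mul μ δ →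
            qle P (d μ) (d m)) →
        Qproj P d src rng mul t F δ =
          Qproj P d src rng mul t (F.erase l) m * (t δ * star (t δ)) := by
  rintro δ hδ m ⟨hm, hmδ, hmax⟩
  have hXδ := ht.Qproj_mul_range_self hQLO hPS hFA F δ
  have hcomm : Commute (Qproj P d src rng mul t F δ)
      (Qproj P d src rng mul t (F.erase l) m * (t δ * star (t δ))) :=
    (ht.Qproj_commute hQLO hPS hFA F (F.erase l) δ m).mul_right
      (ht.Qproj_commute_range hQLO hPS hFA F δ δ)
  have hX : Qproj P d src rng mul t F δ * Qproj P d src rng mul t (F.erase l) m =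
      Qproj P d src rng mul t F δ := by
    refine ht.mul_Qproj_eq_self hQLO hPS hFA ?_ fun β hβ hmβ hβ' => ?_
    · conv_lhs => rw [← hXδ]
      rw [mul_assoc, (ht.range_commute hFA δ m).eq, ht.range_mul_range_of_isInit hPS hmδ, hXδ]
    · rw [← hXδ, mul_assoc, ht.range_mul_range hFA, Finset.mul_sum]
      refine Finset.sum_eq_zero fun γ hγ => ?_
      obtain ⟨α, hα, hδα, hαF, rfl⟩ := hPS.exists_mem_vee_of_mem_MCE hQLO hδ.1 hmax hβ hmβ hβ'
        ((hFA _ _).mem_toFinset.mp hγ)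
      exact ht.Qproj_mul_range_eq_zero hQLO hPS hFA hα hδα hαF
  have hY : Qproj P d src rng mul t (F.erase l) m * (t δ * star (t δ)) *
      Qproj P d src rng mul t F δ =
        Qproj P d src rng mul t (F.erase l) m * (t δ * star (t δ)) := by
    refine ht.mul_Qproj_eq_self hQLO hPS hFA ?_ fun α hα hδα hαF => ?_
    · rw [mul_assoc, ht.range_mul_range_of_isInit hPS (hPS.isInit_refl δ)]
    · obtain ⟨β, hβ, hmβ, hβ', hinit⟩ :=
        hPS.exists_mem_vee_erase hQLO hδ hm hmδ hα hδα hαF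
      rw [mul_assoc, ht.range_mul_range_of_isInit hPS ⟨α, hδα, rfl⟩,
        ← ht.range_mul_range_of_isInit hPS hinit, ← mul_assoc,
        ht.Qproj_mul_range_eq_zero hQLO hPS hFA hβ hmβ hβ', zero_mul]
  rw [← hY, ← hcomm.eq, ← mul_assoc, hX, hXδ]

end PSG
end
end

section
/- Let (G,P) be a quasi-lattice ordered group, (E,φ) a finitely aligned product system of graphs over P, and {S_λ : λ ∈ E¹} a Toeplitz E-family of operators on a Hilbert space H. For each p ∈ P the sum ∑_{μ∈E¹_p} S_μ S_μ* converges in the strong operator topology to a projection Q_p. Then the following are equivalent: (i) for all p,q ∈ P, Q_p Q_q = Q_{p∨q} when p ∨ q < ∞, and Q_p Q_q = 0 when p ∨ q = ∞; (ii) S_μ* S_ν = ∑_{γ = μα = νβ ∈ MCE(μ,ν)} S_α S_β* for all μ,ν ∈ E¹ (the sum being 0 when MCE(μ,ν) = ∅). -/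
open scoped Classical

noncomputable section

namespace PSG

section Algebraic

variable {G : Type*} [Group G] {Λ : Type*} {P : Submonoid G} {d : Λ → G} {src rng : Λ → Λ}
  {mul : Λ → Λ → Λ}

lemma tail_spec {a c : Λ} (h : IsInit src rng mul a c) :
    rng a = src (tail src rng mul a c) ∧ mul a (tail src rng mul a c) = c := by
  rw [tail, dif_pos h]
  exact h.choose_spec

lemma qle_antisymm (hQLO : QuasiLatticeOrdered P) {g h : G} (hgh : qle P g h)
    (hhg : qle P h g) : g = h := by
  have := hQLO.1 _ hgh (by simpa [qle] using hhg)
  exact inv_mul_eq_one.mp this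

lemma IsLUB2.eq (hQLO : QuasiLatticeOrdered P) {p q r r' : G} (h : IsLUB2 P p q r)
    (h' : IsLUB2 P p q r') : r = r' :=
  qle_antisymm hQLO (h.2 _ h'.1) (h'.2 _ h.1)

/-- Every edge has an initial segment of each smaller degree. -/
lemma IsProductSystem.exists_isInit_s12 (hPS : IsProductSystem P d src rng mul) {p : G} (hp : p ∈ P)
    {c : Λ} (hle : qle P p (d c)) : ∃ a, d a = p ∧ IsInit src rng mul a c := by
  obtain ⟨⟨a, b⟩, ⟨ha, -, hab, hc⟩, -⟩ := hPS.factor p (p⁻¹ * d c) hp hle c (by group)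
  exact ⟨a, ha, b, hab, hc⟩

variable {B : Type*} [CStarAlgebra B] [PartialOrder B] {t : Λ → B}

lemma IsToeplitzFamily.src_mul (hPS : IsProductSystem P d src rng mul)
    (hT : IsToeplitzFamily P d src rng mul t) (a : Λ) : t (src a) * t a = t a := by
  rw [hT.mul_eq _ _ (hPS.rng_vertex _ (hPS.d_src a)), hPS.src_mul_self]

lemma IsToeplitzFamily.mul_rng (hPS : IsProductSystem P d src rng mul)
    (hT : IsToeplitzFamily P d src rng mul t) (a : Λ) : t a * t (rng a) = t a := by
  rw [hT.mul_eq _ _ (hPS.src_vertex _ (hPS.d_rng a)).symm, hPS.mul_rng_self]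

lemma IsToeplitzFamily.mul_star_mul_self (hPS : IsProductSystem P d src rng mul)
    (hT : IsToeplitzFamily P d src rng mul t) (a : Λ) : t a * (star (t a) * t a) = t a := by
  rw [hT.star_mul_self, hT.mul_rng hPS]

lemma IsToeplitzFamily.star_mul_mul_star (hPS : IsProductSystem P d src rng mul)
    (hT : IsToeplitzFamily P d src rng mul t) (a : Λ) :
    star (t a) * (t a * star (t a)) = star (t a) := by
  simpa [mul_assoc] using congrArg star (hT.mul_star_mul_self hPS a)

lemma IsToeplitzFamily.mul_tail (hT : IsToeplitzFamily P d src rng mul t) {a c : Λ}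
    (h : IsInit src rng mul a c) : t a * t (tail src rng mul a c) = t c := by
  rw [hT.mul_eq _ _ (tail_spec h).1, (tail_spec h).2]

lemma IsToeplitzFamily.star_mul_of_isInit (hPS : IsProductSystem P d src rng mul)
    (hT : IsToeplitzFamily P d src rng mul t) {a c : Λ} (h : IsInit src rng mul a c) :
    star (t a) * t c = t (tail src rng mul a c) := by
  rw [← hT.mul_tail h, ← mul_assoc, hT.star_mul_self, (tail_spec h).1, hT.src_mul hPS]

/-- The summand `t_c t_c*` compressed by `t_a*` and `t_b`. -/
lemma IsToeplitzFamily.star_mul_mul_star_mul (hPS : IsProductSystem P d src rng mul)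
    (hT : IsToeplitzFamily P d src rng mul t) {a b c : Λ} (ha : IsInit src rng mul a c)
    (hb : IsInit src rng mul b c) :
    star (t a) * t c * (star (t c) * t b) =
      t (tail src rng mul a c) * star (t (tail src rng mul b c)) := by
  rw [hT.star_mul_of_isInit hPS ha, ← hT.star_mul_of_isInit hPS hb, star_mul, star_star]

variable [StarOrderedRing B]

/-- Distinct edges of the same degree have orthogonal ranges. -/
lemma IsToeplitzFamily.star_mul_eq_zero (hPS : IsProductSystem P d src rng mul)
    (hT : IsToeplitzFamily P d src rng mul t) {a b : Λ} (hd : d a = d b) (hne : a ≠ b) :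
    star (t a) * t b = 0 := by
  by_cases hsrc : src a = src b
  · by_cases h1 : d a = 1
    · exact absurd (by rw [← hPS.src_vertex a h1, hsrc, hPS.src_vertex b (hd ▸ h1)]) hne
    · have hle := hT.dom (d a) (hPS.d_mem a) h1 (src b) (hPS.d_src b) {a, b}
        (by simp [hsrc, hd])
      rw [Finset.sum_pair hne] at hle
      have hconj := star_left_conjugate_le_conjugate hle (t b)
      have hb : star (t b) * (t b * star (t b)) * t b = t (rng b) := by
        rw [hT.star_mul_mul_star hPS, hT.star_mul_self]
      have hv : star (t b) * t (src b) * t b = t (rng b) := by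
        rw [mul_assoc, hT.src_mul hPS, hT.star_mul_self]
      rw [mul_add, add_mul, hb, hv, add_le_iff_nonpos_left] at hconj
      have hsq : star (star (t a) * t b) * (star (t a) * t b) = 0 := by
        refine le_antisymm ?_ (star_mul_self_nonneg _)
        simpa [mul_assoc] using hconj
      exact (CStarRing.star_mul_self_eq_zero_iff _).mp hsq
  · rw [← hT.src_mul hPS a, ← hT.src_mul hPS b, star_mul,
      (hT.vertex_sa _ (hPS.d_src a)).star_eq, mul_assoc, ← mul_assoc (t (src a)),
      hT.vertex_orth _ _ (hPS.d_src a) (hPS.d_src b) hsrc]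
    simp

lemma IsToeplitzFamily.star_mul_of_not_isInit (hPS : IsProductSystem P d src rng mul)
    (hT : IsToeplitzFamily P d src rng mul t) {a c : Λ} (hle : qle P (d a) (d c))
    (h : ¬ IsInit src rng mul a c) : star (t a) * t c = 0 := by
  obtain ⟨a', ha', hi⟩ := hPS.exists_isInit_s12 (hPS.d_mem a) hle
  have hne : a ≠ a' := by
    rintro rfl
    exact h hi
  rw [← hT.mul_tail hi, ← mul_assoc, hT.star_mul_eq_zero hPS ha'.symm hne, zero_mul]

end Algebraic

section Operators

variable {G : Type*} {Λ : Type*} {d : Λ → G} {H : Type*} [NormedAddCommGroup H]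
  [InnerProductSpace ℂ H] [CompleteSpace H] {S : Λ → H →L[ℂ] H} {p q : G} {T U : H →L[ℂ] H}

/-- `T` is the strong sum of the range projections of the edges of degree `p`. -/
def IsDegreeSum (d : Λ → G) (S : Λ → H →L[ℂ] H) (p : G) (T : H →L[ℂ] H) : Prop :=
  ∀ h : H, HasSum (fun μ : {a : Λ // d a = p} => S μ.1 (star (S μ.1) h)) (T h)

lemma IsDegreeSum.hasSum_conj (hT : IsDegreeSum d S p T) (A C : H →L[ℂ] H) (h : H) :
    HasSum (fun μ : {a : Λ // d a = p} => (A * S μ.1 * (star (S μ.1) * C)) h)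
      ((A * T * C) h) := by
  simpa using (hT (C h)).mapL A

/-- An operator identity involving `T` may be checked on each summand. -/
lemma IsDegreeSum.mul_eq_mul (hT : IsDegreeSum d S p T) {A C : H →L[ℂ] H}
    (h : ∀ a, d a = p → A * S a * star (S a) = C * S a * star (S a)) : A * T = C * T := by
  ext x
  have hA := hT.hasSum_conj A 1 x
  have hC := hT.hasSum_conj C 1 x
  simp only [mul_one] at hA hC
  have heq : (fun μ : {a : Λ // d a = p} => (A * S μ.1 * star (S μ.1)) x) =
      fun μ => (C * S μ.1 * star (S μ.1)) x := by
    funext μ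
    rw [h μ.1 μ.2]
  rw [heq] at hA
  exact hA.unique hC

lemma IsDegreeSum.mul_eq_zero (hT : IsDegreeSum d S p T) {C : H →L[ℂ] H}
    (h : ∀ a, d a = p → star (S a) * C = 0) : T * C = 0 := by
  ext x
  have hA := hT.hasSum_conj 1 C x
  have heq : (fun μ : {a : Λ // d a = p} => (1 * S μ.1 * (star (S μ.1) * C)) x) =
      fun _ => 0 := by
    funext μ
    rw [h μ.1 μ.2]
    simp
  rw [heq, one_mul] at hA
  exact hA.unique hasSum_zero

variable [Group G] {P : Submonoid G} {src rng : Λ → Λ} {mul : Λ → Λ → Λ}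

lemma IsDegreeSum.star_mul (hPS : IsProductSystem P d src rng mul)
    (hS : IsToeplitzFamily P d src rng mul S) (hT : IsDegreeSum d S p T) {a : Λ}
    (ha : d a = p) : star (S a) * T = star (S a) := by
  ext x
  have hA := hT.hasSum_conj (star (S a)) 1 x
  simp only [mul_one] at hA
  refine hA.unique ?_
  convert hasSum_single (⟨a, ha⟩ : {a : Λ // d a = p}) ?_ using 1
  · rw [mul_assoc, hS.star_mul_mul_star hPS]
  · intro b hb
    rw [hS.star_mul_eq_zero hPS (ha.trans b.2.symm) fun h => hb (Subtype.ext h.symm)]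
    simp

lemma IsDegreeSum.mul_edge (hPS : IsProductSystem P d src rng mul)
    (hS : IsToeplitzFamily P d src rng mul S) (hT : IsDegreeSum d S p T) {a : Λ}
    (ha : d a = p) : T * S a = S a := by
  ext x
  have hA := hT.hasSum_conj 1 (S a) x
  simp only [one_mul] at hA
  refine hA.unique ?_
  convert hasSum_single (⟨a, ha⟩ : {a : Λ // d a = p}) ?_ using 1
  · rw [hS.mul_star_mul_self hPS]
  · intro b hb
    rw [hS.star_mul_eq_zero hPS (b.2.trans ha.symm) fun h => hb (Subtype.ext h)]
    simp

lemma IsDegreeSum.mul_edge_of_qle (hPS : IsProductSystem P d src rng mul)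
    (hS : IsToeplitzFamily P d src rng mul S) (hp : p ∈ P) (hT : IsDegreeSum d S p T) {c : Λ}
    (hc : qle P p (d c)) : T * S c = S c := by
  obtain ⟨a, ha, hi⟩ := hPS.exists_isInit_s12 hp hc
  rw [← hS.mul_tail hi, ← mul_assoc, hT.mul_edge hPS hS ha]

lemma IsDegreeSum.mul_of_qle (hPS : IsProductSystem P d src rng mul)
    (hS : IsToeplitzFamily P d src rng mul S) (hp : p ∈ P) (hT : IsDegreeSum d S p T)
    (hU : IsDegreeSum d S q U) (hpq : qle P p q) : T * U = U := by
  rw [hU.mul_eq_mul (A := T) (C := 1), one_mul]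
  rintro a rfl
  rw [hT.mul_edge_of_qle hPS hS hp hpq, one_mul]

/-- Compressing the sum over degree `d a ∨ d b` gives the finite sum over `MCE(a, b)`. -/
lemma IsDegreeSum.star_mul_mul_eq_sum (hQLO : QuasiLatticeOrdered P)
    (hPS : IsProductSystem P d src rng mul) (hS : IsToeplitzFamily P d src rng mul S) {a b : Λ}
    {r : G} (hr : IsLUB2 P (d a) (d b) r) (hT : IsDegreeSum d S r T) {M : Finset Λ}
    (hM : ↑M = MCE P d src rng mul a b) :
    star (S a) * T * S b =
      ∑ γ ∈ M, S (tail src rng mul a γ) * star (S (tail src rng mul b γ)) := by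
  have hmem (γ : Λ) : γ ∈ M ↔ γ ∈ MCE P d src rng mul a b := by rw [← hM, Finset.mem_coe]
  ext x
  have hsum := hT.hasSum_conj (star (S a)) (S b) x
  have hind := (hasSum_subtype_iff_indicator (s := {c : Λ | d c = r})
    (f := fun c => (star (S a) * S c * (star (S c) * S b)) x)).mp hsum
  refine hind.unique ?_
  convert hasSum_sum_of_ne_finset_zero (s := M) (L := .unconditional Λ) ?_ using 1
  · rw [_root_.sum_apply]
    refine Finset.sum_congr rfl fun γ hγ => ?_
    obtain ⟨ha, hb, hlub⟩ := (hmem γ).mp hγ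
    rw [Set.indicator_of_mem (show γ ∈ {c : Λ | d c = r} from hlub.eq hQLO hr),
      hS.star_mul_mul_star_mul hPS ha hb]
  · intro γ hγ
    refine Set.indicator_apply_eq_zero.mpr fun (hd : d γ = r) => ?_
    subst hd
    by_cases ha : IsInit src rng mul a γ
    · have hb : ¬ IsInit src rng mul b γ := fun hb => hγ ((hmem γ).mpr ⟨ha, hb, hr⟩)
      have h0 : star (S γ) * S b = 0 := by
        simpa using congrArg star (hS.star_mul_of_not_isInit hPS hr.1.2.2 hb)
      rw [h0]
      simp
    · rw [hS.star_mul_of_not_isInit hPS hr.1.2.1 ha]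
      simp

lemma TCKrel.star_mul_eq_zero (hrel : TCKrel P d src rng mul S) {a b : Λ} (h : ¬ ∃ r, IsUB P (d a) (d b) r) :
    star (S a) * S b = 0 := by
  have hM : ((∅ : Finset Λ) : Set Λ) = MCE P d src rng mul a b := by
    rw [Finset.coe_empty, eq_comm, Set.eq_empty_iff_forall_notMem]
    exact fun γ hγ => h ⟨_, hγ.2.2.1⟩
  simpa using hrel a b ∅ hM

/-- Under the Cuntz–Krieger-type relation, `S_a* S_b S_b*` is absorbed by the strong sum over
degree `d a ∨ d b`. -/
lemma TCKrel.star_mul_mul_star_mul (hQLO : QuasiLatticeOrdered P)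
    (hPS : IsProductSystem P d src rng mul) (hFA : FinitelyAligned P d src rng mul)
    (hS : IsToeplitzFamily P d src rng mul S) (hrel : TCKrel P d src rng mul S) {a b : Λ} {r : G}
    (hr : IsLUB2 P (d a) (d b) r) (hT : IsDegreeSum d S r T) :
    star (S a) * S b * star (S b) * T = star (S a) * S b * star (S b) := by
  rw [hrel a b (hFA a b).toFinset (by simp), Finset.sum_mul, Finset.sum_mul]
  refine Finset.sum_congr rfl fun γ hγ => ?_
  obtain ⟨-, hb, hlub⟩ := (hFA a b).mem_toFinset.mp hγ
  rw [mul_assoc (S _) (star _) (star _), ← star_mul, hS.mul_tail hb, mul_assoc,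
    hT.star_mul hPS hS (hlub.eq hQLO hr)]

end Operators

/-- Proposition 6.1 (Nica covariance for Toeplitz families): with
`Q_p = ∑_{μ∈E¹_p} S_μ S_μ*` (strong convergence), the spatial Nica-covariance condition (i)
is equivalent to the Cuntz–Krieger-type relation (ii). -/
theorem stmt12 {G : Type*} [Group G] {Λ : Type*} (P : Submonoid G)
    (hQLO : QuasiLatticeOrdered P)
    (d : Λ → G) (src rng : Λ → Λ) (mul : Λ → Λ → Λ)
    (hPS : IsProductSystem P d src rng mul)
    (hFA : FinitelyAligned P d src rng mul)
    {H : Type*} [NormedAddCommGroup H] [InnerProductSpace ℂ H] [CompleteSpace H]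
    (S : Λ → H →L[ℂ] H)
    (hT : IsToeplitzFamily P d src rng mul S)
    (Q : G → H →L[ℂ] H)
    (hQ : ∀ p, p ∈ P → ∀ h : H,
      HasSum (fun μ : {a : Λ // d a = p} => S μ.1 (star (S μ.1) h)) (Q p h)) :
    ((∀ p ∈ P, ∀ q ∈ P,
        ((∃ r, IsUB P p q r) → ∀ r, IsLUB2 P p q r → Q p * Q q = Q r) ∧
        (¬ (∃ r, IsUB P p q r) → Q p * Q q = 0)) ↔
      TCKrel P d src rng mul S) := by
  have hsum (p : G) (hp : p ∈ P) : IsDegreeSum d S p (Q p) := hQ p hp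
  constructor
  · intro hNica a b M hM
    have ha := hPS.d_mem a
    have hb := hPS.d_mem b
    have hab : star (S a) * S b = star (S a) * (Q (d a) * Q (d b)) * S b := by
      rw [← mul_assoc, (hsum _ ha).star_mul hPS hT rfl, mul_assoc,
        (hsum _ hb).mul_edge hPS hT rfl]
    by_cases hub : ∃ r, IsUB P (d a) (d b) r
    · obtain ⟨r, hr⟩ := hQLO.2 _ ha _ hb hub
      rw [hab, (hNica _ ha _ hb).1 hub r hr]
      exact (hsum r hr.1.1).star_mul_mul_eq_sum hQLO hPS hT hr hM
    · have hempty : M = ∅ := by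
        rw [← Finset.coe_eq_empty, hM, Set.eq_empty_iff_forall_notMem]
        exact fun γ hγ => hub ⟨_, hγ.2.2.1⟩
      rw [hab, (hNica _ ha _ hb).2 hub, hempty]
      simp
  · intro hrel p hp q hq
    refine ⟨fun _ r hr => ?_, fun hub => ?_⟩
    · have hQr := hsum r hr.1.1
      have habsorb : Q p * Q q * Q r = Q r := by
        rw [mul_assoc, (hsum q hq).mul_of_qle hPS hT hq hQr hr.1.2.2,
          (hsum p hp).mul_of_qle hPS hT hp hQr hr.1.2.1]
      have hzero : Q p * (Q q * (1 - Q r)) = 0 := by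
        refine (hsum p hp).mul_eq_zero ?_
        rintro a rfl
        ext x
        have hterm := (hsum q hq).hasSum_conj (star (S a)) (1 - Q r) x
        rw [← mul_assoc]
        refine hterm.unique ?_
        convert hasSum_zero using 2 with b
        · obtain ⟨b, rfl⟩ := b
          rw [← mul_assoc, mul_sub, mul_one,
            hrel.star_mul_mul_star_mul hQLO hPS hFA hT hr hQr, sub_self]
          simp
        · simp
      rw [← mul_assoc, mul_sub, mul_one, habsorb, sub_eq_zero] at hzero
      exact hzero
    · refine (hsum p hp).mul_eq_zero ?_
      rintro a rfl
      rw [(hsum q hq).mul_eq_mul (C := 0), zero_mul]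
      rintro b rfl
      rw [hrel.star_mul_eq_zero hub, zero_mul, zero_mul, zero_mul]

end PSG
end
end
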